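/- Let 1 < p < 2 and n ≥ 1. For all x, y ∈ ℝⁿ one has the pointwise majorization |y|^p − (p−1)^{−p}|x|^p ≤ p^{2−p}·(|y| − (p−1)^{−1}|x|)·(|x|+|y|)^{p−1}. -/

import Mathlib

open Real

/-!
Both sides depend only on `‖x‖` and `‖y‖` and are homogeneous of degree `p`, so one may normalise
`‖x‖ + ‖y‖ = 1` and put `s = ‖y‖ ∈ [0, 1]`. The difference of the two sides is then the function
`gap p`, and the claim is `gap p ≤ 0` on `[0, 1]`.

The right-hand side is affine in `s` and tangent to the left-hand side at `s = 1 / p`, that is,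
`gap p` and its derivative vanish there. With `k = (p - 1) ^ (p / (2 - p))`, the second derivative
of `gap p` is nonnegative for `s ≤ k * (1 - s)` and nonpositive afterwards, so the inflection point
is `k / (1 + k)`, which lies to the left of `1 / p`. On the concave part `gap p` lies below
its horizontal tangent at `1 / p`. On the convex part it is at most the larger of its two endpoint
values: the value at `k / (1 + k)` has just been bounded, and `gap p 0 ≤ 0` amounts to
`p ^ (2 - p) * (p - 1) ^ (p - 1) ≤ 1`, the weighted AM-GM inequality with weights `2 - p` and
`p - 1`, because `(2 - p) * p + (p - 1) * (p - 1) = 1`.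
-/

/-- The left-hand side minus the right-hand side of the majorization, on the slice
`‖x‖ = 1 - s`, `‖y‖ = s`. -/
noncomputable def gap (p s : ℝ) : ℝ :=
  s ^ p - (p - 1) ^ (-p) * (1 - s) ^ p - p ^ (2 - p) * (s - (p - 1)⁻¹ * (1 - s))

/-- The first derivative of `gap p`. -/
noncomputable def gapD (p s : ℝ) : ℝ :=
  p * s ^ (p - 1) + (p - 1) ^ (-p) * (p * (1 - s) ^ (p - 1)) - p ^ (2 - p) * (1 + (p - 1)⁻¹)

/-- The second derivative of `gap p` on `(0, 1)`. -/
noncomputable def gapDD (p s : ℝ) : ℝ :=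
  p * (p - 1) * (s ^ (p - 2) - (p - 1) ^ (-p) * (1 - s) ^ (p - 2))

lemma hasDerivAt_gap {p : ℝ} (hp1 : 1 < p) (s : ℝ) : HasDerivAt (gap p) (gapD p s) s := by
  have h1 : HasDerivAt (fun s : ℝ => 1 - s) (-1) s := by
    simpa using (hasDerivAt_id s).const_sub 1
  have h2 := (hasDerivAt_id s).rpow_const (p := p) (Or.inr hp1.le)
  have h3 := h1.rpow_const (p := p) (Or.inr hp1.le)
  have h4 := ((hasDerivAt_id s).sub (h1.const_mul (p - 1)⁻¹)).const_mul (p ^ (2 - p))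
  refine ((h2.sub (h3.const_mul ((p - 1) ^ (-p)))).sub h4).congr_deriv ?_
  simp only [gapD, id]
  ring

lemma hasDerivAt_gapD {p s : ℝ} (h0 : 0 < s) (hs1 : s < 1) :
    HasDerivAt (gapD p) (gapDD p s) s := by
  have h1 : HasDerivAt (fun s : ℝ => 1 - s) (-1) s := by
    simpa using (hasDerivAt_id s).const_sub 1
  have h2 := (hasDerivAt_id s).rpow_const (p := p - 1) (Or.inl h0.ne')
  have h3 := h1.rpow_const (p := p - 1) (Or.inl (sub_pos.2 hs1).ne')
  refine (((h2.const_mul p).add ((h3.const_mul p).const_mul ((p - 1) ^ (-p)))).sub_const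
    (p ^ (2 - p) * (1 + (p - 1)⁻¹))).congr_deriv ?_
  simp only [gapDD, id, show p - 1 - 1 = p - 2 by ring]
  ring

lemma gap_zero_nonpos {p : ℝ} (hp1 : 1 < p) (hp2 : p < 2) : gap p 0 ≤ 0 := by
  have hq : 0 < p - 1 := by linarith
  have h := geom_mean_le_arith_mean2_weighted (by linarith : 0 ≤ 2 - p) hq.le
    (by linarith : 0 ≤ p) hq.le (by ring)
  have h' : p ^ (2 - p) * (p - 1) ^ (p - 1) ≤ 1 := h.trans_eq (by ring)
  have e : p ^ (2 - p) * (p - 1)⁻¹ = (p ^ (2 - p) * (p - 1) ^ (p - 1)) * (p - 1) ^ (-p) := by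
    rw [mul_assoc, ← rpow_add hq, ← rpow_neg_one]
    congr 2
    ring
  have h2 := mul_le_mul_of_nonneg_right h' (rpow_nonneg hq.le (-p))
  simp only [gap, zero_rpow (by linarith : p ≠ 0), sub_zero, one_rpow]
  linarith

lemma gap_tangent {p : ℝ} (hp1 : 1 < p) : gap p (1 / p) = 0 ∧ gapD p (1 / p) = 0 := by
  have hq : 0 < p - 1 := by linarith
  have hp : 0 < p := by linarith
  have e1 : 1 - 1 / p = (p - 1) / p := by field_simp
  have e2 : (p - 1) ^ (-p) * (p - 1) ^ p = 1 := by
    rw [← rpow_add hq]; simp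
  have e3 : (p - 1) ^ (-p) * (p - 1) ^ (p - 1) = (p - 1)⁻¹ := by
    rw [← rpow_add hq, ← rpow_neg_one]; congr 1; ring
  have e4 : p / p ^ (p - 1) = p ^ (2 - p) := by
    rw [show 2 - p = 1 - (p - 1) by ring, rpow_sub hp 1, rpow_one]
  constructor
  · rw [gap, e1, div_rpow hq.le hp.le, div_rpow zero_le_one hp.le, one_rpow, mul_div_assoc', e2]
    field_simp
    ring
  · rw [gapD, e1, div_rpow hq.le hp.le, div_rpow zero_le_one hp.le, one_rpow, ← e4]
    have : (p - 1) ^ (-p) * (p * ((p - 1) ^ (p - 1) / p ^ (p - 1)))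
        = p / p ^ (p - 1) * ((p - 1) ^ (-p) * (p - 1) ^ (p - 1)) := by ring
    rw [this, e3]
    ring

lemma gap_nonpos {p : ℝ} (hp1 : 1 < p) (hp2 : p < 2) {s : ℝ} (hs0 : 0 ≤ s) (hs1 : s ≤ 1) :
    gap p s ≤ 0 := by
  have hq : 0 < p - 1 := by linarith
  have hp : 0 < p := by linarith
  obtain ⟨k, hk⟩ : ∃ k, k = (p - 1) ^ (p / (2 - p)) := ⟨_, rfl⟩
  have hk0 : 0 < k := hk ▸ rpow_pos_of_pos hq _
  -- `k ≤ p - 1` places the inflection point to the left of `1 / p`.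
  have hkle : k ≤ p - 1 := by
    have := rpow_le_rpow_of_exponent_ge hq (by linarith)
      (show 1 ≤ p / (2 - p) by rw [le_div_iff₀ (by linarith)]; linarith)
    rwa [rpow_one, ← hk] at this
  have hkc : (p - 1) ^ (-p) = k ^ (p - 2) := by
    rw [hk, ← rpow_mul hq.le]
    congr 1
    have : 2 - p ≠ 0 := by linarith
    field_simp
    ring
  obtain ⟨c, hc⟩ : ∃ c, c = k / (1 + k) := ⟨_, rfl⟩
  have hc' : c * (1 + k) = k := by rw [hc]; field_simp
  have hc0 : 0 < c := hc ▸ by positivity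
  have hcp : c < 1 / p := by
    rw [hc, div_lt_div_iff₀ (by linarith) hp]
    nlinarith
  have hp1' : 1 / p < 1 := by rw [div_lt_one hp]; exact hp1
  have hcont : Continuous (gap p) :=
    continuous_iff_continuousAt.2 fun s => (hasDerivAt_gap hp1 s).continuousAt
  have hDD : ∀ t, 0 < t → t < 1 →
      gapDD p t = p * (p - 1) * (t ^ (p - 2) - (k * (1 - t)) ^ (p - 2)) := by
    intro t h0 h1
    rw [gapDD, hkc, mul_rpow hk0.le (by linarith)]
  have hconc : ConcaveOn ℝ (Set.Icc c 1) (gap p) := by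
    refine concaveOn_of_hasDerivWithinAt2_nonpos (convex_Icc _ _) hcont.continuousOn
      (f' := gapD p) (f'' := gapDD p) (fun t _ => (hasDerivAt_gap hp1 t).hasDerivWithinAt) ?_ ?_
    all_goals
      intro t ht
      rw [interior_Icc] at ht
      have ht0 : 0 < t := hc0.trans ht.1
    · exact (hasDerivAt_gapD ht0 ht.2).hasDerivWithinAt
    · rw [hDD t ht0 ht.2]
      have := rpow_le_rpow_of_nonpos (mul_pos hk0 (sub_pos.2 ht.2))
        (show k * (1 - t) ≤ t by nlinarith [ht.1]) (show p - 2 ≤ 0 by linarith)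
      exact mul_nonpos_of_nonneg_of_nonpos (by positivity) (by linarith)
  have hconv : ConvexOn ℝ (Set.Icc 0 c) (gap p) := by
    refine convexOn_of_hasDerivWithinAt2_nonneg (convex_Icc _ _) hcont.continuousOn
      (f' := gapD p) (f'' := gapDD p) (fun t _ => (hasDerivAt_gap hp1 t).hasDerivWithinAt) ?_ ?_
    all_goals
      intro t ht
      rw [interior_Icc] at ht
      have ht1 : t < 1 := by linarith [ht.2]
    · exact (hasDerivAt_gapD ht.1 ht1).hasDerivWithinAt
    · rw [hDD t ht.1 ht1]
      have := rpow_le_rpow_of_nonpos ht.1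
        (show t ≤ k * (1 - t) by nlinarith [ht.2]) (show p - 2 ≤ 0 by linarith)
      exact mul_nonneg (by positivity) (by linarith)
  obtain ⟨hg, hgD⟩ := gap_tangent hp1
  have hd : HasDerivAt (gap p) 0 (1 / p) := hgD ▸ hasDerivAt_gap hp1 (1 / p)
  have hright : ∀ t, c ≤ t → t ≤ 1 → gap p t ≤ 0 := by
    intro t h0 h1
    have hmem : (1 / p) ∈ Set.Icc c 1 := ⟨hcp.le, hp1'.le⟩
    rcases lt_trichotomy t (1 / p) with h | h | h
    · have := hconc.le_slope_of_hasDerivAt ⟨h0, h1⟩ hmem h hd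
      rw [slope_def_field, hg, le_div_iff₀ (by linarith)] at this
      linarith
    · rw [h, hg]
    · have := hconc.slope_le_of_hasDerivAt hmem ⟨h0, h1⟩ h hd
      rw [slope_def_field, hg, div_le_iff₀ (by linarith)] at this
      linarith
  rcases le_total c s with h | h
  · exact hright s h hs1
  · exact (hconv.le_max_of_mem_Icc ⟨le_rfl, hc0.le⟩ ⟨hc0.le, le_rfl⟩ ⟨hs0, h⟩).trans
      (max_le (gap_zero_nonpos hp1 hp2) (hright c le_rfl (by linarith)))

/-- The pointwise majorization `|y|^p − (p−1)^{−p}|x|^p ≤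
p^{2−p}(|y| − (p−1)^{−1}|x|)(|x|+|y|)^{p−1}` for `1 < p < 2`. -/
theorem stmt_1 (p : ℝ) (hp1 : 1 < p) (hp2 : p < 2) (n : ℕ) (hn : 1 ≤ n)
    (x y : EuclideanSpace ℝ (Fin n)) :
    ‖y‖ ^ p - (p - 1) ^ (-p) * ‖x‖ ^ p ≤
      p ^ (2 - p) * (‖y‖ - (p - 1)⁻¹ * ‖x‖) * (‖x‖ + ‖y‖) ^ (p - 1) := by
  have ha := norm_nonneg x
  have hb := norm_nonneg y
  generalize ‖x‖ = a at *
  generalize ‖y‖ = b at *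
  rcases (add_nonneg ha hb).eq_or_lt with h | h
  · obtain rfl : a = 0 := by linarith
    obtain rfl : b = 0 := by linarith
    simp [zero_rpow (by linarith : p ≠ 0)]
  · obtain ⟨r, hr⟩ : ∃ r, r = a + b := ⟨_, rfl⟩
    rw [← hr] at h ⊢
    obtain ⟨s, hs⟩ : ∃ s, s = b / r := ⟨_, rfl⟩
    have hbs : b = r * s := by rw [hs]; field_simp
    have has : a = r * (1 - s) := by linear_combination -hr - hbs
    have hs0 : 0 ≤ s := hs ▸ by positivity
    have hs1 : s ≤ 1 := by rw [hs, div_le_one h]; linarith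
    have hpow : r ^ p = r ^ (p - 1) * r := by
      rw [← rpow_add_one h.ne', sub_add_cancel]
    have key := mul_nonpos_of_nonneg_of_nonpos (rpow_nonneg h.le p) (gap_nonpos hp1 hp2 hs0 hs1)
    rw [hbs, has, mul_rpow h.le hs0, mul_rpow h.le (by linarith : 0 ≤ 1 - s)]
    rw [gap] at key
    have e : p ^ (2 - p) * (r * s - (p - 1)⁻¹ * (r * (1 - s))) * r ^ (p - 1)
        = r ^ p * (p ^ (2 - p) * (s - (p - 1)⁻¹ * (1 - s))) := by rw [hpow]; ring
    rw [e]
    linarith
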